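/- arXiv:1308.0516 — 5 statements merged into one kernel-verified Lean document; each statement's English description precedes it below -/
import Mathlib

section
/- There is no g ∈ GL(4,𝔽₂) whose induced action on ℙ³(𝔽₂) maps the affine set {points with homogeneous coordinates (a₁,a₂,a₃,a₄) satisfying a₄ = 1} onto the type II set; that is, these two totally even 8-point sets lie in distinct orbits of the GL(4,𝔽₂)-action. -/
/-! The affine set is the complement of a plane, and collineations send planes to planes. If the
type II set were an image of the affine set, its complement would be a plane too. But the type II
set contains the line through `(1,0,0,0)` and `(0,1,0,0)`, and in `ℙ³` every line meets every
plane. -/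

/-- The projective space ℙ³(𝔽₂): points correspond to one-dimensional
linear subspaces of 𝔽₂⁴. -/
abbrev P3F2 := Projectivization (ZMod 2) (Fin 4 → ZMod 2)

/-- A plane in ℙ³(𝔽₂): the set of points whose corresponding one-dimensional
subspace is contained in a fixed three-dimensional linear subspace of 𝔽₂⁴. -/
def IsPlane (P : Set P3F2) : Prop :=
  ∃ W : Submodule (ZMod 2) (Fin 4 → ZMod 2),
    Module.finrank (ZMod 2) W = 3 ∧ P = {x : P3F2 | x.submodule ≤ W}

/-- A line in ℙ³(𝔽₂): the set of points whose corresponding one-dimensional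
subspace is contained in a fixed two-dimensional linear subspace of 𝔽₂⁴. -/
def IsLine (L : Set P3F2) : Prop :=
  ∃ W : Submodule (ZMod 2) (Fin 4 → ZMod 2),
    Module.finrank (ZMod 2) W = 2 ∧ L = {x : P3F2 | x.submodule ≤ W}

/-- A subset of ℙ³(𝔽₂) is totally even if it meets every plane in an even
number of points. -/
def TotallyEven (M : Set P3F2) : Prop :=
  ∀ P : Set P3F2, IsPlane P → Even (M ∩ P).ncard

/-- The point of ℙ³(𝔽₂) with homogeneous coordinates `v`. -/
def pt (v : Fin 4 → ZMod 2) (hv : v ≠ 0) : P3F2 := Projectivization.mk (ZMod 2) v hv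

/-- The type I (affine) set: points with homogeneous coordinates (a₁,a₂,a₃,a₄)
satisfying a₄ = 1. -/
def typeI : Set P3F2 :=
  {x : P3F2 | ∃ (v : Fin 4 → ZMod 2) (hv : v ≠ 0), v 3 = 1 ∧ x = Projectivization.mk (ZMod 2) v hv}

/-- The type II set. -/
def typeII : Set P3F2 :=
  {pt ![1,0,0,0] (by decide), pt ![1,1,0,0] (by decide), pt ![0,1,0,0] (by decide),
   pt ![1,0,1,0] (by decide), pt ![0,0,1,0] (by decide), pt ![0,1,1,0] (by decide),
   pt ![1,1,1,1] (by decide), pt ![0,0,0,1] (by decide)}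

/-- The action of an element of GL(4,𝔽₂) (a linear automorphism of 𝔽₂⁴)
on ℙ³(𝔽₂). -/
def projMap (g : (Fin 4 → ZMod 2) ≃ₗ[ZMod 2] (Fin 4 → ZMod 2)) : P3F2 → P3F2 :=
  Projectivization.map g.toLinearMap g.injective

open Module Projectivization Submodule
open scoped LinearAlgebra.Projectivization

section DivisionRing

variable {K V : Type*} [DivisionRing K] [AddCommGroup V] [Module K V]

theorem exists_submodule_le_inf_of_finrank_lt_add [FiniteDimensional K V] {U W : Submodule K V}
    (h : finrank K V < finrank K U + finrank K W) :
    ∃ x : ℙ K V, x.submodule ≤ U ⊓ W := by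
  have hUW : U ⊓ W ≠ ⊥ := fun hbot ↦
    h.not_ge (finrank_add_finrank_le_of_disjoint (disjoint_iff.mpr hbot))
  obtain ⟨v, hv, hv0⟩ := exists_mem_ne_zero_of_ne_bot hUW
  exact ⟨mk K v hv0, (span_singleton_le_iff_mem v _).mpr hv⟩

theorem image_map_setOf_submodule_le {K' V' : Type*} [DivisionRing K'] [AddCommGroup V']
    [Module K' V'] {σ : K →+* K'} [RingHomSurjective σ] (f : V →ₛₗ[σ] V')
    (hf : Function.Injective f) (W : Submodule K V) :
    Projectivization.map f hf '' {x | x.submodule ≤ W} = {y | y.submodule ≤ W.map f} := by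
  ext y
  induction y with | h w hw =>
  simp only [Set.mem_image, Set.mem_ofPred_eq, submodule_mk, span_singleton_le_iff_mem]
  constructor
  · rintro ⟨x, hx, hxw⟩
    induction x with | h v hv =>
    rw [submodule_mk, span_singleton_le_iff_mem] at hx
    obtain ⟨a, rfl⟩ := (mk_eq_mk_iff' K' _ _ _ _).mp hxw.symm
    exact smul_mem _ a (mem_map_of_mem hx)
  · rintro ⟨v, hv, rfl⟩
    have hv0 : v ≠ 0 := fun h ↦ hw (h ▸ map_zero f)
    exact ⟨mk K v hv0, (span_singleton_le_iff_mem v W).mpr hv, map_mk f hf v hv0⟩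

end DivisionRing

section ZModTwo

theorem exists_zmod_two {p : ZMod 2 → Prop} : (∃ a, p a) ↔ p 0 ∨ p 1 :=
  Fin.exists_fin_two

theorem zmod_two_ne_one_iff {a : ZMod 2} : a ≠ 1 ↔ a = 0 := by
  decide +revert

variable {V : Type*} [AddCommGroup V] [Module (ZMod 2) V] {v w : V}

theorem finrank_span_pair_zmod_two (hv : v ≠ 0) (hw : w ≠ 0) (hvw : v ≠ w) :
    finrank (ZMod 2) (span (ZMod 2) {v, w}) = 2 := by
  have hli : LinearIndependent (ZMod 2) ![v, w] := by
    rw [LinearIndependent.pair_iff' hv, ← not_exists, exists_zmod_two, zero_smul, one_smul]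
    exact not_or.mpr ⟨hw.symm, hvw⟩
  rw [← Matrix.range_cons_cons_empty v w ![], finrank_span_eq_card hli, Fintype.card_fin]

theorem setOf_submodule_le_span_pair_zmod_two (hv : v ≠ 0) (hw : w ≠ 0) (hvw : v + w ≠ 0) :
    {x : ℙ (ZMod 2) V | x.submodule ≤ span (ZMod 2) {v, w}} =
      {mk (ZMod 2) v hv, mk (ZMod 2) w hw, mk (ZMod 2) (v + w) hvw} := by
  ext x
  induction x with | h u hu =>
  simp only [Set.mem_ofPred_eq, submodule_mk, span_singleton_le_iff_mem, mem_span_pair,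
    Set.mem_insert_iff, Set.mem_singleton_iff, mk_eq_mk_iff', exists_zmod_two, zero_smul,
    one_smul, zero_add, add_zero, hu.symm, false_or]
  tauto

end ZModTwo

theorem IsLine.inter_isPlane_nonempty {L P : Set P3F2} (hL : IsLine L) (hP : IsPlane P) :
    (L ∩ P).Nonempty := by
  obtain ⟨U, hU, rfl⟩ := hL
  obtain ⟨W, hW, rfl⟩ := hP
  have hdim : finrank (ZMod 2) (Fin 4 → ZMod 2) < finrank (ZMod 2) U + finrank (ZMod 2) W := by
    simp [hU, hW]
  obtain ⟨x, hx⟩ := exists_submodule_le_inf_of_finrank_lt_add hdim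
  exact ⟨x, le_inf_iff.mp hx⟩

theorem projMap_bijective (g : (Fin 4 → ZMod 2) ≃ₗ[ZMod 2] (Fin 4 → ZMod 2)) :
    Function.Bijective (projMap g) :=
  Finite.injective_iff_bijective.mp (map_injective _ g.injective)

theorem IsPlane.image_projMap {P : Set P3F2} (hP : IsPlane P)
    (g : (Fin 4 → ZMod 2) ≃ₗ[ZMod 2] (Fin 4 → ZMod 2)) : IsPlane (projMap g '' P) := by
  obtain ⟨W, hW, rfl⟩ := hP
  exact ⟨W.map g.toLinearMap, (g.finrank_map_eq W).trans hW,
    image_map_setOf_submodule_le g.toLinearMap g.injective W⟩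

theorem mk_mem_typeI_iff {v : Fin 4 → ZMod 2} (hv : v ≠ 0) :
    mk (ZMod 2) v hv ∈ typeI ↔ v 3 = 1 := by
  refine ⟨?_, fun h ↦ ⟨v, hv, h, rfl⟩⟩
  rintro ⟨w, hw, hw3, hvw⟩
  obtain ⟨a, rfl⟩ := (mk_eq_mk_iff _ _ _ _ _).mp hvw
  rwa [Subsingleton.elim a 1, one_smul]

theorem isPlane_compl_typeI : IsPlane typeIᶜ := by
  let lastCoord : Dual (ZMod 2) (Fin 4 → ZMod 2) := LinearMap.proj 3
  have hne : lastCoord ≠ 0 := fun h ↦ one_ne_zero (DFunLike.congr_fun h 1)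
  have hfinrank : finrank (ZMod 2) (LinearMap.ker lastCoord) = 3 := by
    simpa using Dual.finrank_ker_add_one_of_ne_zero hne
  refine ⟨LinearMap.ker lastCoord, hfinrank, ?_⟩
  ext x
  induction x using Projectivization.ind with | h v hv =>
  rw [Set.mem_compl_iff, mk_mem_typeI_iff, ← ne_eq, zmod_two_ne_one_iff]
  exact (span_singleton_le_iff_mem v (LinearMap.ker lastCoord)).symm

theorem exists_isLine_subset_typeII : ∃ L, IsLine L ∧ L ⊆ typeII := by
  let e₁ : Fin 4 → ZMod 2 := ![1, 0, 0, 0]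
  let e₂ : Fin 4 → ZMod 2 := ![0, 1, 0, 0]
  have he₁ : e₁ ≠ 0 := by decide
  have he₂ : e₂ ≠ 0 := by decide
  have hne : e₁ ≠ e₂ := by decide
  have hadd : e₁ + e₂ ≠ 0 := by decide
  refine ⟨_, ⟨span (ZMod 2) {e₁, e₂}, finrank_span_pair_zmod_two he₁ he₂ hne, rfl⟩, ?_⟩
  rw [setOf_submodule_le_span_pair_zmod_two he₁ he₂ hadd]
  rintro x (rfl | rfl | rfl) <;> simp [typeII, pt, e₁, e₂]

/-- No element of GL(4,𝔽₂) maps the type I (affine) set onto the type II set: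
the two totally even 8-point sets lie in distinct orbits. -/
theorem typeI_not_equivalent_typeII :
    ¬ ∃ g : (Fin 4 → ZMod 2) ≃ₗ[ZMod 2] (Fin 4 → ZMod 2),
        projMap g '' typeI = typeII := by
  rintro ⟨g, hg⟩
  obtain ⟨L, hL, hLsub⟩ := exists_isLine_subset_typeII
  have hplane : IsPlane typeIIᶜ := by
    rw [← hg, ← Set.image_compl_eq (projMap_bijective g)]
    exact isPlane_compl_typeI.image_projMap g
  obtain ⟨x, hxL, hx⟩ := hL.inter_isPlane_nonempty hplane
  exact hx (hLsub hxL)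
end

section
/- The type II set is a subset of ℙ³(𝔽₂) with exactly 8 elements and it is totally even: every plane of ℙ³(𝔽₂) meets it in an even number of points. -/
open Finset Module

section DivisionRing

variable {K V : Type*} [DivisionRing K] [AddCommGroup V] [Module K V]

theorem mk'_injective_of_subsingleton_units [Subsingleton Kˣ] :
    Function.Injective (Projectivization.mk' K (V := V)) := by
  rintro ⟨v, hv⟩ ⟨w, hw⟩ hvw
  obtain ⟨a, ha⟩ := (Projectivization.mk_eq_mk_iff K v w hv hw).1 hvw
  rw [Subsingleton.elim a 1, one_smul] at ha
  exact Subtype.ext ha.symm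

theorem submodule_mk'_le_iff (v : {v : V // v ≠ 0}) (W : Submodule K V) :
    (Projectivization.mk' K v).submodule ≤ W ↔ (v : V) ∈ W := by
  rw [Projectivization.mk'_eq_mk, Projectivization.submodule_mk,
    Submodule.span_singleton_le_iff_mem]

theorem exists_ker_eq_of_finrank_quotient_eq_one {W : Submodule K V}
    (hW : finrank K (V ⧸ W) = 1) : ∃ f : V →ₗ[K] K, f.ker = W := by
  obtain ⟨e⟩ := nonempty_linearEquiv_of_finrank_eq_one hW
  exact ⟨e.symm.toLinearMap ∘ₗ W.mkQ, by rw [LinearEquiv.ker_comp, Submodule.ker_mkQ]⟩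

end DivisionRing

theorem natCast_card_filter_eq_zero_zmod_two {ι : Type*} (s : Finset ι) (g : ι → ZMod 2) :
    (#{i ∈ s | g i = 0} : ZMod 2) = #s + ∑ i ∈ s, g i := by
  have indicator_eq_zero : ∀ a : ZMod 2, (if a = 0 then 1 else 0) = 1 + a := by decide
  calc (#{i ∈ s | g i = 0} : ZMod 2)
    _ = ∑ i ∈ s, if g i = 0 then 1 else 0 := natCast_card_filter _ _
    _ = ∑ i ∈ s, (1 + g i) := sum_congr rfl fun i _ ↦ indicator_eq_zero (g i)
    _ = #s + ∑ i ∈ s, g i := by rw [sum_add_distrib, sum_const, nsmul_one]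

section Hyperplane

variable {V : Type*} [AddCommGroup V] [Module (ZMod 2) V]

theorem even_card_filter_linearMap_eq_zero {ι : Type*} {s : Finset ι} {v : ι → V}
    (hcard : Even #s) (hsum : ∑ i ∈ s, v i = 0) (f : V →ₗ[ZMod 2] ZMod 2) :
    Even #{i ∈ s | f (v i) = 0} := by
  rw [← ZMod.natCast_eq_zero_iff_even, natCast_card_filter_eq_zero_zmod_two, ← map_sum, hsum,
    map_zero, add_zero, hcard.natCast_zmod_two]

theorem even_ncard_image_mk'_inter_hyperplane {S : Finset {v : V // v ≠ 0}} (hcard : Even #S)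
    (hsum : ∑ v ∈ S, (v : V) = 0) {W : Submodule (ZMod 2) V}
    (hW : finrank (ZMod 2) (V ⧸ W) = 1) :
    Even (Projectivization.mk' (ZMod 2) '' (S : Set {v : V // v ≠ 0}) ∩
      {x | x.submodule ≤ W}).ncard := by
  obtain ⟨f, rfl⟩ := exists_ker_eq_of_finrank_quotient_eq_one hW
  have vectors_in_ker : (S : Set {v : V // v ≠ 0}) ∩
      Projectivization.mk' (ZMod 2) ⁻¹' {x | x.submodule ≤ f.ker} =
        ({v ∈ S | f v = 0} : Finset {v : V // v ≠ 0}) := by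
    ext v
    simp only [Set.mem_inter_iff, Set.mem_preimage, Set.mem_ofPred_eq, submodule_mk'_le_iff,
      LinearMap.mem_ker, mem_coe, mem_filter]
  rw [← Set.image_inter_preimage,
    Set.ncard_image_of_injective _ mk'_injective_of_subsingleton_units,
    vectors_in_ker, Set.ncard_coe_finset]
  exact even_card_filter_linearMap_eq_zero hcard hsum f

end Hyperplane

theorem totallyEven_image_mk' {S : Finset {v : Fin 4 → ZMod 2 // v ≠ 0}} (hcard : Even #S)
    (hsum : ∑ v ∈ S, (v : Fin 4 → ZMod 2) = 0) :
    TotallyEven (Projectivization.mk' (ZMod 2) '' (S : Set {v : Fin 4 → ZMod 2 // v ≠ 0})) := by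
  rintro _ ⟨W, hW, rfl⟩
  refine even_ncard_image_mk'_inter_hyperplane hcard hsum ?_
  rw [W.finrank_quotient, hW, finrank_fin_fun]

/-- The homogeneous coordinate vectors of the points of `typeII`; they form a `Finset` of nonzero
vectors so that their number and their sum can be computed by `decide`. -/
def typeIIVectors : Finset {v : Fin 4 → ZMod 2 // v ≠ 0} :=
  {⟨![1,0,0,0], by decide⟩, ⟨![1,1,0,0], by decide⟩, ⟨![0,1,0,0], by decide⟩,
   ⟨![1,0,1,0], by decide⟩, ⟨![0,0,1,0], by decide⟩, ⟨![0,1,1,0], by decide⟩,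
   ⟨![1,1,1,1], by decide⟩, ⟨![0,0,0,1], by decide⟩}

theorem card_typeIIVectors : #typeIIVectors = 8 := by
  decide

theorem sum_typeIIVectors : ∑ v ∈ typeIIVectors, (v : Fin 4 → ZMod 2) = 0 := by
  decide

theorem typeII_eq_image_mk' :
    typeII = Projectivization.mk' (ZMod 2) ''
      (typeIIVectors : Set {v : Fin 4 → ZMod 2 // v ≠ 0}) := by
  simp only [typeII, pt, typeIIVectors, coe_insert, coe_singleton, Set.image_insert_eq,
    Set.image_singleton, Projectivization.mk'_eq_mk]

/-- The type II set has exactly 8 elements and is totally even. -/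
theorem typeII_totallyEven : typeII.ncard = 8 ∧ TotallyEven typeII := by
  rw [typeII_eq_image_mk']
  constructor
  · rw [Set.ncard_image_of_injective _ mk'_injective_of_subsingleton_units, Set.ncard_coe_finset,
      card_typeIIVectors]
  · have even_card : Even #typeIIVectors := by
      rw [card_typeIIVectors]
      decide
    exact totallyEven_image_mk' even_card sum_typeIIVectors
end

section
/- Let M be a totally even subset of ℙ³(𝔽₂) with exactly 8 elements. Then there exists a plane P with |M ∩ P| = 6 if and only if there exists a line ℓ of ℙ³(𝔽₂) all of whose points belong to M. -/
/-!
Fix a subspace `W`. Every point outside `W` lies on exactly one subspace covering `W`, so these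
subspaces partition the points of `M` outside `W`.

* If `W` is a plane with `|M ∩ W| = 6`, then `M` misses exactly one of the seven points of `W`,
  and any line of `W` avoiding that point lies in `M`.
* If `W` is a line contained in `M`, the five points of `M` outside `W` are distributed among the
  three planes through `W`. Each plane receives an odd number of them, because its total is even
  and `W` contributes three. Hence the distribution is `1 + 1 + 3`, and one plane has
  `3 + 3 = 6` points of `M`.
-/

open Module
open scoped LinearAlgebra.Projectivization

theorem exists_eq_three_of_odd_of_sum_eq_card_add_two {ι : Type*} [Fintype ι] {f : ι → ℕ}
    (hodd : ∀ i, Odd (f i)) (hsum : ∑ i, f i = Fintype.card ι + 2) : ∃ i, f i = 3 := by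
  choose g hg using hodd
  have hg_sum : ∑ i, g i = 1 := by
    simp only [hg, Finset.sum_add_distrib, ← Finset.mul_sum, Finset.sum_const, Finset.card_univ,
      smul_eq_mul, mul_one] at hsum
    lia
  obtain ⟨i, -, hi⟩ := Finset.exists_ne_zero_of_sum_ne_zero (hg_sum ▸ one_ne_zero)
  have hle : g i ≤ 1 := hg_sum ▸ Finset.single_le_sum_of_canonicallyOrdered (Finset.mem_univ i)
  exact ⟨i, by have := hg i; lia⟩

section Pencils

variable {K V : Type*} [Field K] [AddCommGroup V] [Module K V]

theorem coe_projectivization (W : Submodule K V) :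
    (W.projectivization : Set (ℙ K V)) = {x | x.submodule ≤ W} :=
  Set.ext (Submodule.mem_projectivization_iff_submodule_le W)

theorem covBy_submodule_sup {W : Submodule K V} {x : ℙ K V} (hx : x ∉ W.projectivization) :
    W ⋖ x.submodule ⊔ W := by
  rw [Submodule.mem_projectivization_iff_submodule_le, x.submodule_eq,
    Submodule.span_singleton_le_iff_mem] at hx
  exact x.submodule_eq ▸ Submodule.covBy_span_singleton_sup hx

theorem existsUnique_covBy_mem_projectivization {W : Submodule K V} {x : ℙ K V}
    (hx : x ∉ W.projectivization) : ∃! H, W ⋖ H ∧ x ∈ H.projectivization := by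
  have hcov := covBy_submodule_sup hx
  refine ⟨x.submodule ⊔ W, ⟨hcov, ?_⟩, fun H ⟨hWH, hxH⟩ => ?_⟩
  · exact (Submodule.mem_projectivization_iff_submodule_le _ x).2 le_sup_left
  · have hle : x.submodule ⊔ W ≤ H :=
      sup_le ((Submodule.mem_projectivization_iff_submodule_le H x).1 hxH) hWH.le
    exact ((hWH.eq_or_eq hcov.le hle).resolve_left hcov.ne').symm

theorem exists_covBy_notMem_projectivization {W : Submodule K V} {x : ℙ K V}
    (hx : x ∈ W.projectivization) : ∃ L, L ⋖ W ∧ x ∉ L.projectivization := by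
  rw [Submodule.mem_projectivization_iff_submodule_le] at hx
  obtain ⟨L, hdisj, hsup⟩ := IsModularLattice.exists_disjoint_and_sup_eq hx
  have hxL : x ∉ L.projectivization := fun h => by
    have hbot := hdisj.eq_bot_of_le ((Submodule.mem_projectivization_iff_submodule_le L x).1 h)
    have hrank : finrank K x.submodule = 0 := by rw [hbot, finrank_bot]
    exact zero_ne_one (hrank.symm.trans x.finrank_submodule)
  exact ⟨L, hsup ▸ covBy_submodule_sup hxL, hxL⟩

theorem exists_covBy_subset_of_ncard_inter_add_one_eq {W : Submodule K V} {M : Set (ℙ K V)}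
    (h : (M ∩ W.projectivization).ncard + 1 = (W.projectivization : Set (ℙ K V)).ncard) :
    ∃ L, L ⋖ W ∧ (L.projectivization : Set (ℙ K V)) ⊆ M := by
  have hmissing : ((W.projectivization : Set (ℙ K V)) \ M).ncard = 1 := by
    have := Set.ncard_inter_add_ncard_sdiff_eq_ncard (W.projectivization : Set (ℙ K V)) M
      (Set.finite_of_ncard_pos (by lia))
    rw [Set.inter_comm] at this
    lia
  obtain ⟨x, hsdiff⟩ := Set.ncard_eq_one.1 hmissing
  have hx : x ∈ (W.projectivization : Set (ℙ K V)) \ M := hsdiff ▸ Set.mem_singleton x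
  obtain ⟨L, hLW, hxL⟩ := exists_covBy_notMem_projectivization hx.1
  refine ⟨L, hLW, fun y hyL => by_contra fun hyM => hxL ?_⟩
  have hyW : y ∈ W.projectivization := Submodule.projectivization.monotone hLW.le hyL
  have hyx : y ∈ ({x} : Set (ℙ K V)) := hsdiff ▸ ⟨hyW, hyM⟩
  exact Set.mem_singleton_iff.1 hyx ▸ hyL

theorem finrank_eq_add_one_of_covBy {W H : Submodule K V} [FiniteDimensional K H] (h : W ⋖ H) :
    finrank K H = finrank K W + 1 := by
  have hquot : finrank K (H ⧸ W.submoduleOf H) = 1 :=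
    isSimpleModule_iff_finrank_eq_one.1 ((covBy_iff_quot_is_simple h.le).1 h)
  have hsub : finrank K (W.submoduleOf H) = finrank K W :=
    (Submodule.submoduleOfEquivOfLe h.le).finrank_eq
  rw [← (W.submoduleOf H).finrank_quotient_add_finrank, hquot, hsub, add_comm]

theorem ncard_sdiff_projectivization_eq_sum_covBy {M : Set (ℙ K V)} (hM : M.Finite)
    (W : Submodule K V) [Fintype {H // W ⋖ H}] :
    (M \ W.projectivization).ncard =
      ∑ H : {H // W ⋖ H}, ((M ∩ H.1.projectivization) \ W.projectivization).ncard := by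
  have hunion : M \ W.projectivization =
      ⋃ H : {H // W ⋖ H}, (M ∩ H.1.projectivization) \ W.projectivization := by
    ext x
    simp only [Set.mem_iUnion, Set.mem_sdiff, Set.mem_inter_iff, SetLike.mem_coe]
    constructor
    · rintro ⟨hxM, hxW⟩
      obtain ⟨H, ⟨hWH, hxH⟩, -⟩ := existsUnique_covBy_mem_projectivization hxW
      exact ⟨⟨H, hWH⟩, ⟨hxM, hxH⟩, hxW⟩
    · rintro ⟨-, ⟨hxM, -⟩, hxW⟩
      exact ⟨hxM, hxW⟩
  rw [hunion, Set.ncard_iUnion_of_finite fun H => (hM.inter_of_left _).sdiff,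
    finsum_eq_sum_of_fintype]
  intro H₁ H₂ hne
  refine Set.disjoint_left.2 fun x hx₁ hx₂ => hne (Subtype.ext ?_)
  exact (existsUnique_covBy_mem_projectivization hx₁.2).unique
    ⟨H₁.2, hx₁.1.2⟩ ⟨H₂.2, hx₂.1.2⟩

variable [Finite K]

theorem ncard_projectivization (W : Submodule K V) :
    (W.projectivization : Set (ℙ K V)).ncard =
      ∑ i ∈ Finset.range (finrank K W), Nat.card K ^ i := by
  have hrange : Set.range (Projectivization.map W.subtype W.injective_subtype) =
      (W.projectivization : Set (ℙ K V)) := by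
    ext x
    constructor
    · rintro ⟨⟨v, hv⟩, rfl⟩
      exact v.2
    · induction x using Projectivization.ind with
      | h v hv => exact fun hvW => ⟨.mk K ⟨v, hvW⟩ fun h => hv (congrArg Subtype.val h), rfl⟩
  rw [← hrange, ← Nat.card_coe_set_eq,
    Nat.card_range_of_injective (Projectivization.map_injective _ W.injective_subtype),
    Projectivization.card_of_finrank K W rfl]

theorem ncard_projectivization_sdiff_of_covBy [FiniteDimensional K V] {W H : Submodule K V}
    (h : W ⋖ H) :
    ((H.projectivization : Set (ℙ K V)) \ W.projectivization).ncard =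
      Nat.card K ^ finrank K W := by
  have : Finite V := Module.finite_of_finite K
  have hWH : (W.projectivization : Set (ℙ K V)) ⊆ H.projectivization :=
    Submodule.projectivization.monotone h.le
  rw [Set.ncard_sdiff hWH, ncard_projectivization, ncard_projectivization,
    finrank_eq_add_one_of_covBy h, Finset.sum_range_succ, Nat.add_sub_cancel_left]

theorem card_covBy_of_finrank_add_two {W : Submodule K V} [Fintype {H // W ⋖ H}]
    (h : finrank K W + 2 = finrank K V) : Fintype.card {H // W ⋖ H} = Nat.card K + 1 := by
  have : FiniteDimensional K V := .of_finrank_pos (by lia)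
  have : Finite V := Module.finite_of_finite K
  have hcompl : ((Set.univ : Set (ℙ K V)) \ W.projectivization).ncard =
      (Nat.card K + 1) * Nat.card K ^ finrank K W := by
    rw [Set.ncard_sdiff (Set.subset_univ _), Set.ncard_univ, ncard_projectivization,
      Projectivization.card_of_finrank K V h.symm, Finset.sum_range_succ, Finset.sum_range_succ,
      add_assoc, Nat.add_sub_cancel_left]
    ring
  have hpencil : ((Set.univ : Set (ℙ K V)) \ W.projectivization).ncard =
      Fintype.card {H // W ⋖ H} * Nat.card K ^ finrank K W := by
    rw [ncard_sdiff_projectivization_eq_sum_covBy Set.finite_univ]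
    simp only [Set.univ_inter]
    rw [Fintype.sum_congr _ _ fun H => ncard_projectivization_sdiff_of_covBy H.2,
      Finset.sum_const, Finset.card_univ, smul_eq_mul]
  exact Nat.eq_of_mul_eq_mul_right (pow_pos Nat.card_pos _) (hpencil.symm.trans hcompl)

theorem exists_covBy_ncard_inter_eq_ncard_add_three {W : Submodule K V} {M : Set (ℙ K V)}
    (hcodim : finrank K W + 2 = finrank K V) (hWM : (W.projectivization : Set (ℙ K V)) ⊆ M)
    (hW : Odd (W.projectivization : Set (ℙ K V)).ncard)
    (hM : M.ncard = (W.projectivization : Set (ℙ K V)).ncard + Nat.card K + 3)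
    (heven : ∀ H, W ⋖ H → Even (M ∩ H.projectivization).ncard) :
    ∃ H, W ⋖ H ∧
      (M ∩ H.projectivization).ncard = (W.projectivization : Set (ℙ K V)).ncard + 3 := by
  have : FiniteDimensional K V := .of_finrank_pos (by lia)
  have : Finite V := Module.finite_of_finite K
  have : Fintype {H // W ⋖ H} := Fintype.ofFinite _
  have hsplit (H : {H // W ⋖ H}) : ((M ∩ H.1.projectivization) \ W.projectivization).ncard +
      (W.projectivization : Set (ℙ K V)).ncard = (M ∩ H.1.projectivization).ncard :=
    Set.ncard_sdiff_add_ncard_of_subset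
      (Set.subset_inter hWM (Submodule.projectivization.monotone H.2.le))
  have hodd (H : {H // W ⋖ H}) :
      Odd ((M ∩ H.1.projectivization) \ W.projectivization).ncard := by
    have hH := heven H.1 H.2
    rw [← hsplit H] at hH
    exact (Nat.even_add'.1 hH).2 hW
  have hsum : ∑ H : {H // W ⋖ H}, ((M ∩ H.1.projectivization) \ W.projectivization).ncard =
      Fintype.card {H // W ⋖ H} + 2 := by
    rw [← ncard_sdiff_projectivization_eq_sum_covBy (Set.toFinite M), Set.ncard_sdiff hWM, hM,
      card_covBy_of_finrank_add_two hcodim]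
    lia
  obtain ⟨H, hH⟩ := exists_eq_three_of_odd_of_sum_eq_card_add_two hodd hsum
  exact ⟨H, H.2, by rw [← hsplit H, hH, add_comm]⟩

end Pencils

theorem isPlane_iff_exists_eq_projectivization {P : Set P3F2} :
    IsPlane P ↔ ∃ W : Submodule (ZMod 2) (Fin 4 → ZMod 2),
      finrank (ZMod 2) W = 3 ∧ P = W.projectivization := by
  simp only [IsPlane, coe_projectivization]

theorem isLine_iff_exists_eq_projectivization {L : Set P3F2} :
    IsLine L ↔ ∃ W : Submodule (ZMod 2) (Fin 4 → ZMod 2),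
      finrank (ZMod 2) W = 2 ∧ L = W.projectivization := by
  simp only [IsLine, coe_projectivization]

/-- For a totally even 8-point subset M of ℙ³(𝔽₂), there is a plane meeting M
in 6 points if and only if there is a line entirely contained in M. -/
theorem plane_six_iff_line_subset (M : Set P3F2)
    (hM : M.ncard = 8) (hTE : TotallyEven M) :
    (∃ P : Set P3F2, IsPlane P ∧ (M ∩ P).ncard = 6) ↔
    (∃ L : Set P3F2, IsLine L ∧ L ⊆ M) := by
  constructor
  · rintro ⟨P, hP, h6⟩
    obtain ⟨W, hW, rfl⟩ := isPlane_iff_exists_eq_projectivization.1 hP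
    obtain ⟨L, hLW, hLM⟩ := exists_covBy_subset_of_ncard_inter_add_one_eq (W := W) (M := M) <| by
      simp [h6, ncard_projectivization, hW, Finset.sum_range_succ]
    have hL : finrank (ZMod 2) L = 2 := by
      have := finrank_eq_add_one_of_covBy hLW
      lia
    exact ⟨_, isLine_iff_exists_eq_projectivization.2 ⟨L, hL, rfl⟩, hLM⟩
  · rintro ⟨L, hL, hLM⟩
    obtain ⟨W, hW, rfl⟩ := isLine_iff_exists_eq_projectivization.1 hL
    have hWcard : (W.projectivization : Set P3F2).ncard = 3 := by
      simp [ncard_projectivization, hW, Finset.sum_range_succ]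
    have hplane {H} (hWH : W ⋖ H) : IsPlane (H.projectivization : Set P3F2) :=
      isPlane_iff_exists_eq_projectivization.2
        ⟨H, by rw [finrank_eq_add_one_of_covBy hWH, hW], rfl⟩
    obtain ⟨H, hWH, hH⟩ := exists_covBy_ncard_inter_eq_ncard_add_three (by simp [hW]) hLM
      (by rw [hWcard]; decide) (by simp [hM, hWcard]) fun H hWH => hTE _ (hplane hWH)
    exact ⟨_, hplane hWH, by rw [hH, hWcard]⟩
end

section
/- Let M be a totally even subset of ℙ³(𝔽₂) with exactly 8 elements. If there exists a plane P with |M ∩ P| = 6, then there exists g ∈ GL(4,𝔽₂) whose induced action on ℙ³(𝔽₂) maps M onto the type II set. -/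
/-! Over `𝔽₂` a point of projective space is the same thing as a nonzero vector. If evenly many
points meet every hyperplane evenly, then every linear functional takes the value `1` evenly often
on their vectors, which therefore sum to zero; the same holds for all vectors of a subspace of
dimension at least two. Now let `W` be a hyperplane with `|W|` equal to `|M|`, such that `M`
contains all points of `W` but one, `p`. Then exactly two vectors of `M` lie outside `W`, and
comparing the sums over `M` and `W` shows that they add up to `p`. So `M` arises from `W` by
exchanging `{0, p}` for a pair `{a, p - a}` outside `W`. The general linear group acts transitively
on the triples `(W, p, a)`, and the type II set is of this form. -/

open Module Projectivization
open scoped LinearAlgebra.Projectivization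

section PairSwap

variable {G G' : Type*} [AddCommGroup G] [AddCommGroup G']

/-- The set obtained from `T` by exchanging the pair `{0, p}` for the pair `{a, p - a}`, which has
the same sum. It is the common shape of the set under classification and of the type II set, with
`T` the set of vectors of a hyperplane. -/
def pairSwap (T : Set G) (p a : G) : Set G :=
  T \ {0, p} ∪ {a, p - a}

theorem image_pairSwap {F : Type*} [FunLike F G G'] [AddMonoidHomClass F G G'] (g : F)
    (hg : Function.Injective g) (T : Set G) (p a : G) :
    g '' pairSwap T p a = pairSwap (g '' T) (g p) (g a) := by
  simp only [pairSwap, Set.image_union, Set.image_sdiff hg, Set.image_pair, map_zero, map_sub]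

theorem exists_eq_pairSwap_of_sum_eq [DecidableEq G] {S T : Finset G} (h0S : 0 ∉ S) (h0T : 0 ∈ T)
    (hcard : S.card = T.card) (hinter : (S ∩ T).card + 2 = T.card)
    (hsum : ∑ x ∈ S, x = ∑ x ∈ T, x) :
    ∃ p ∈ T, p ≠ 0 ∧ ∃ a ∉ T, (S : Set G) = pairSwap T p a := by
  have hTS : (T \ S).card = 2 := by
    have := Finset.card_inter_add_card_sdiff T S
    rw [Finset.inter_comm] at this
    omega
  have hST : (S \ T).card = 2 := by
    have := Finset.card_inter_add_card_sdiff S T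
    omega
  obtain ⟨p, hp, hTS⟩ : ∃ p, p ≠ 0 ∧ T \ S = {0, p} := by
    obtain ⟨x, y, hxy, h⟩ := Finset.card_eq_two.1 hTS
    have h0 : (0 : G) ∈ ({x, y} : Finset G) := h ▸ Finset.mem_sdiff.2 ⟨h0T, h0S⟩
    obtain rfl | rfl := by simpa using h0
    · exact ⟨y, hxy.symm, h⟩
    · exact ⟨x, hxy, h.trans (Finset.pair_comm _ _)⟩
  obtain ⟨a, b, hab, hST⟩ := Finset.card_eq_two.1 hST
  have hb : b = p - a := by
    have h := Finset.sum_sdiff_sub_sum_sdiff (s₁ := S) (s₂ := T) (f := fun x => x)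
    rw [hST, hTS, Finset.sum_pair hab, Finset.sum_pair hp.symm, hsum, sub_self, zero_add] at h
    exact eq_sub_of_add_eq' (sub_eq_zero.1 h).symm
  have hpT : p ∈ T := (Finset.mem_sdiff.1 (hTS ▸ by simp : p ∈ T \ S)).1
  have haT : a ∉ T := (Finset.mem_sdiff.1 (hST ▸ by simp : a ∈ S \ T)).2
  refine ⟨p, hpT, hp, a, haT, ?_⟩
  have hSeq : S = T \ (T \ S) ∪ S \ T := by grind
  rw [pairSwap, ← hb, hSeq, hTS, hST]
  push_cast
  rfl

end PairSwap

section Transitivity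

theorem exists_linearEquiv_of_isCompl {R V V' : Type*} [Ring R] [AddCommGroup V] [Module R V]
    [AddCommGroup V'] [Module R V'] {W U : Submodule R V} {W' U' : Submodule R V'}
    (h : IsCompl W U) (h' : IsCompl W' U') (e : W ≃ₗ[R] W') (f : U ≃ₗ[R] U') :
    ∃ g : V ≃ₗ[R] V', (∀ x : W, g x = e x) ∧ ∀ x : U, g x = f x :=
  ⟨(W.prodEquivOfIsCompl U h).symm ≪≫ₗ e.prodCongr f ≪≫ₗ W'.prodEquivOfIsCompl U' h',
    by simp, by simp⟩

variable {K V V' : Type*} [DivisionRing K] [AddCommGroup V] [Module K V] [AddCommGroup V']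
  [Module K V']

theorem exists_linearEquiv_span_singleton_apply_eq {x : V} {y : V'} (hx : x ≠ 0) (hy : y ≠ 0) :
    ∃ f : (K ∙ x) ≃ₗ[K] (K ∙ y), f ⟨x, Submodule.mem_span_singleton_self x⟩ = y := by
  refine ⟨(LinearEquiv.toSpanNonzeroSingleton K V x hx).symm ≪≫ₗ
    LinearEquiv.toSpanNonzeroSingleton K V' y hy, ?_⟩
  rw [LinearEquiv.trans_apply, ← LinearEquiv.toSpanNonzeroSingleton_one K V x hx,
    LinearEquiv.symm_apply_apply, LinearEquiv.toSpanNonzeroSingleton_one]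

theorem exists_linearEquiv_apply_eq {x y : V} (hx : x ≠ 0) (hy : y ≠ 0) :
    ∃ g : V ≃ₗ[K] V, g x = y := by
  obtain ⟨f, hf⟩ := exists_linearEquiv_span_singleton_apply_eq (K := K) hx hy
  obtain ⟨g, hg⟩ := Submodule.exists_linearEquiv_restrict_eq f
  exact ⟨g, (hg ⟨x, Submodule.mem_span_singleton_self x⟩).symm.trans hf⟩

theorem isCompl_span_singleton_of_finrank_add_one {W : Submodule K V}
    (hW : finrank K W + 1 = finrank K V) {a : V} (ha : a ∉ W) : IsCompl W (K ∙ a) := by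
  have ha0 : a ≠ 0 := fun h => ha (h ▸ W.zero_mem)
  have : FiniteDimensional K V := FiniteDimensional.of_finrank_pos (by omega)
  have hdisj := Submodule.disjoint_span_singleton_of_notMem (K := K) ha
  exact ⟨hdisj, codisjoint_iff.2 <|
    Submodule.eq_top_of_disjoint _ _ (by rw [finrank_span_singleton ha0, hW]) hdisj⟩

theorem exists_linearEquiv_image_hyperplane_eq {W W' : Submodule K V}
    (hW : finrank K W + 1 = finrank K V) (hW' : finrank K W' + 1 = finrank K V) {p p' a a' : V}
    (hp : p ∈ W) (hp0 : p ≠ 0) (ha : a ∉ W) (hp' : p' ∈ W') (hp0' : p' ≠ 0) (ha' : a' ∉ W') :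
    ∃ g : V ≃ₗ[K] V, g '' W = W' ∧ g p = p' ∧ g a = a' := by
  have : FiniteDimensional K V := FiniteDimensional.of_finrank_pos (by omega)
  let e : W ≃ₗ[K] W' := LinearEquiv.ofFinrankEq W W' (by omega)
  obtain ⟨t, ht⟩ : ∃ t : W' ≃ₗ[K] W', t (e ⟨p, hp⟩) = ⟨p', hp'⟩ :=
    exists_linearEquiv_apply_eq (by simpa using hp0) (by simpa using hp0')
  have ha0 : a ≠ 0 := fun h => ha (h ▸ W.zero_mem)
  have ha0' : a' ≠ 0 := fun h => ha' (h ▸ W'.zero_mem)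
  obtain ⟨f, hf⟩ := exists_linearEquiv_span_singleton_apply_eq (K := K) ha0 ha0'
  obtain ⟨g, hgW, hgf⟩ := exists_linearEquiv_of_isCompl
    (isCompl_span_singleton_of_finrank_add_one hW ha)
    (isCompl_span_singleton_of_finrank_add_one hW' ha') (e ≪≫ₗ t) f
  refine ⟨g, Set.Subset.antisymm ?_ fun y hy => ?_, ?_, ?_⟩
  · rintro _ ⟨x, hx, rfl⟩
    rw [hgW ⟨x, hx⟩]
    exact Subtype.coe_prop _
  · exact ⟨(e ≪≫ₗ t).symm ⟨y, hy⟩, Subtype.coe_prop _, by rw [hgW, LinearEquiv.apply_symm_apply]⟩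
  · rw [hgW ⟨p, hp⟩, LinearEquiv.trans_apply, ht]
  · exact (hgf ⟨a, Submodule.mem_span_singleton_self a⟩).trans hf

end Transitivity

section Representatives

variable {K V V' : Type*} [DivisionRing K] [AddCommGroup V] [Module K V] [AddCommGroup V']
  [Module K V']

theorem rep_injective : Function.Injective (Projectivization.rep : ℙ K V → V) := by
  intro x y h
  rw [← x.mk_rep, ← y.mk_rep]
  simp only [h]

theorem ncard_inter_submodule_le (M : Set (ℙ K V)) (H : Submodule K V) :
    (M ∩ {x | x.submodule ≤ H}).ncard = (Projectivization.rep '' M ∩ H).ncard := by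
  have hH : {x : ℙ K V | x.submodule ≤ H} = Projectivization.rep ⁻¹' (H : Set V) := by
    ext x
    rw [Set.mem_ofPred_eq, x.submodule_eq, Submodule.span_singleton_le_iff_mem]
    rfl
  rw [hH, ← Set.image_inter_preimage, Set.ncard_image_of_injective _ rep_injective]

variable [Subsingleton Kˣ]

theorem rep_mk (v : V) (hv : v ≠ 0) : (mk K v hv).rep = v := by
  obtain ⟨c, hc⟩ := exists_smul_eq_mk_rep K v hv
  rw [← hc, Subsingleton.elim c 1, one_smul]

theorem rep_map (g : V →ₗ[K] V') (hg : Function.Injective g) (x : ℙ K V) :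
    (Projectivization.map g hg x).rep = g x.rep := by
  induction x using Projectivization.ind with
  | h v hv => rw [map_mk, rep_mk, rep_mk]

theorem image_map_preimage_rep (g : V →ₗ[K] V') (hg : Function.Injective g) (T : Set V) :
    Projectivization.map g hg '' (Projectivization.rep ⁻¹' T) =
      Projectivization.rep ⁻¹' (g '' T) := by
  ext y
  constructor
  · rintro ⟨x, hx, rfl⟩
    exact ⟨x.rep, hx, (rep_map g hg x).symm⟩
  · rintro ⟨v, hv, hvy⟩
    have hv0 : v ≠ 0 := fun h => y.rep_nonzero (by rw [← hvy, h, map_zero])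
    exact ⟨mk K v hv0, by rwa [Set.mem_preimage, rep_mk], rep_injective (by
      rw [rep_map, rep_mk, hvy])⟩

end Representatives

section ParityOfSums

variable {V : Type*} [AddCommGroup V] [Module (ZMod 2) V]

theorem sum_eq_zero_of_forall_even_card_filter {S : Finset V} (hS : Even S.card)
    (hdual : ∀ f : Dual (ZMod 2) V, f ≠ 0 → Even {x ∈ S | f x = 0}.card) : ∑ x ∈ S, x = 0 := by
  rw [← forall_dual_apply_eq_zero_iff (ZMod 2)]
  intro f
  obtain rfl | hf := eq_or_ne f 0
  · rfl
  have hne : Even {x ∈ S | ¬f x = 0}.card := by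
    rw [← Finset.card_filter_add_card_filter_not (fun x => f x = 0), Nat.even_add] at hS
    exact hS.1 (hdual f hf)
  have hone : ∀ c : ZMod 2, c ≠ 0 → c = 1 := by decide
  calc
    f (∑ x ∈ S, x) = ∑ x ∈ S with ¬f x = 0, f x := by rw [map_sum, Finset.sum_filter_ne_zero]
    _ = ∑ x ∈ S with ¬f x = 0, 1 :=
      Finset.sum_congr rfl fun x hx => hone _ (Finset.mem_filter.1 hx).2
    _ = 0 := by rw [Finset.sum_const, nsmul_one, ZMod.natCast_eq_zero_iff_even.2 hne]

theorem even_natCard_of_finrank_pos (hV : 0 < finrank (ZMod 2) V) : Even (Nat.card V) := by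
  have : FiniteDimensional (ZMod 2) V := FiniteDimensional.of_finrank_pos hV
  rw [natCard_eq_pow_finrank (K := ZMod 2), Nat.card_zmod]
  exact even_two.pow_of_ne_zero hV.ne'

theorem sum_univ_eq_zero_of_one_lt_finrank [Fintype V] (hV : 1 < finrank (ZMod 2) V) :
    ∑ x : V, x = 0 := by
  refine sum_eq_zero_of_forall_even_card_filter ?_ fun f hf => ?_
  · rw [Finset.card_univ, Fintype.card_eq_nat_card]
    exact even_natCard_of_finrank_pos (by omega)
  · have hker := Dual.finrank_ker_add_one_of_ne_zero hf
    have heven : Even (Nat.card {x // f x = 0}) :=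
      even_natCard_of_finrank_pos (V := LinearMap.ker f) (by omega)
    rwa [Nat.card_eq_fintype_card, Fintype.card_subtype] at heven

end ParityOfSums

section Classification

variable {V : Type*} [AddCommGroup V] [Module (ZMod 2) V]

theorem exists_eq_preimage_rep_pairSwap [Finite V] {M : Set (ℙ (ZMod 2) V)}
    {W : Submodule (ZMod 2) V} (hW : 1 < finrank (ZMod 2) W) (hM : M.ncard = Nat.card W)
    (hMW : (M ∩ {x | x.submodule ≤ W}).ncard + 2 = Nat.card W)
    (heven : ∀ H : Submodule (ZMod 2) V, finrank (ZMod 2) H + 1 = finrank (ZMod 2) V →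
      Even (M ∩ {x | x.submodule ≤ H}).ncard) :
    ∃ p ∈ W, p ≠ 0 ∧ ∃ a ∉ W, M = Projectivization.rep ⁻¹' pairSwap (W : Set V) p a := by
  classical
  have := Fintype.ofFinite V
  obtain ⟨S, hS⟩ := (Set.toFinite (Projectivization.rep '' M)).exists_finset_coe
  have hcount (H : Submodule (ZMod 2) V) :
      (M ∩ {x | x.submodule ≤ H}).ncard = (S ∩ (H : Set V).toFinset).card := by
    rw [ncard_inter_submodule_le, ← hS, ← Set.ncard_coe_finset, Finset.coe_inter, Set.coe_toFinset]
  have hcardW : (W : Set V).toFinset.card = Nat.card W := by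
    rw [Set.toFinset_card, Nat.card_eq_fintype_card]; rfl
  have hcardS : S.card = Nat.card W := by
    rw [← Set.ncard_coe_finset, hS, Set.ncard_image_of_injective _ rep_injective, hM]
  have hsumS : ∑ x ∈ S, x = 0 := by
    refine sum_eq_zero_of_forall_even_card_filter ?_ fun f hf => ?_
    · exact hcardS ▸ even_natCard_of_finrank_pos (by omega)
    · convert heven _ (Dual.finrank_ker_add_one_of_ne_zero hf)
      rw [hcount]
      congr 1
      ext x
      simp
  have hsumW : ∑ x ∈ (W : Set V).toFinset, x = 0 := by
    rw [← Finset.sum_set_coe]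
    simpa using congrArg W.subtype (sum_univ_eq_zero_of_one_lt_finrank hW)
  have h0S : 0 ∉ S := by
    rw [← Finset.mem_coe, hS]
    rintro ⟨x, -, hx⟩
    exact x.rep_nonzero hx
  obtain ⟨p, hp, hp0, a, ha, hSpa⟩ := exists_eq_pairSwap_of_sum_eq (T := (W : Set V).toFinset) h0S
    (by simp) (hcardS.trans hcardW.symm) (by rw [← hcount, hMW, hcardW]) (hsumS.trans hsumW.symm)
  rw [Set.coe_toFinset] at hSpa
  exact ⟨p, by simpa using hp, hp0, a, by simpa using ha, by
    rw [← hSpa, hS, rep_injective.preimage_image]⟩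

theorem totallyEven_with_six_plane_is_typeII_general {M : Set (ℙ (ZMod 2) V)}
    {W W' : Submodule (ZMod 2) V} (hV : 2 < finrank (ZMod 2) V)
    (hW : finrank (ZMod 2) W + 1 = finrank (ZMod 2) V)
    (hW' : finrank (ZMod 2) W' + 1 = finrank (ZMod 2) V) {p' a' : V} (hp' : p' ∈ W')
    (hp0' : p' ≠ 0) (ha' : a' ∉ W') (hM : M.ncard = Nat.card W)
    (hMW : (M ∩ {x | x.submodule ≤ W}).ncard + 2 = Nat.card W)
    (heven : ∀ H : Submodule (ZMod 2) V, finrank (ZMod 2) H + 1 = finrank (ZMod 2) V →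
      Even (M ∩ {x | x.submodule ≤ H}).ncard) :
    ∃ g : V ≃ₗ[ZMod 2] V, Projectivization.map g.toLinearMap g.injective '' M =
      Projectivization.rep ⁻¹' pairSwap (W' : Set V) p' a' := by
  have : FiniteDimensional (ZMod 2) V := FiniteDimensional.of_finrank_pos (by omega)
  have : Finite V := finite_of_finite (ZMod 2)
  obtain ⟨p, hp, hp0, a, ha, rfl⟩ := exists_eq_preimage_rep_pairSwap (by omega) hM hMW heven
  obtain ⟨g, hgW, hgp, hga⟩ :=
    exists_linearEquiv_image_hyperplane_eq hW hW' hp hp0 ha hp' hp0' ha'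
  refine ⟨g, ?_⟩
  rw [image_map_preimage_rep, LinearEquiv.coe_coe, image_pairSwap g g.injective, hgW, hgp, hga]

end Classification

theorem typeII_eq_preimage_rep_pairSwap :
    typeII = Projectivization.rep ⁻¹'
      pairSwap (LinearMap.ker (LinearMap.proj 3 : (Fin 4 → ZMod 2) →ₗ[ZMod 2] ZMod 2))
        ![1, 1, 1, 0] ![0, 0, 0, 1] := by
  have hrep : Projectivization.rep '' typeII =
      {![1, 0, 0, 0], ![1, 1, 0, 0], ![0, 1, 0, 0], ![1, 0, 1, 0], ![0, 0, 1, 0], ![0, 1, 1, 0],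
        ![1, 1, 1, 1], ![0, 0, 0, 1]} := by
    simp only [typeII, pt, Set.image_insert_eq, Set.image_singleton, rep_mk]
  rw [← rep_injective.preimage_image typeII, hrep]
  congr 1
  ext v
  simp only [pairSwap, Set.mem_union, Set.mem_sdiff, Set.mem_insert_iff, Set.mem_singleton_iff,
    SetLike.mem_coe, LinearMap.mem_ker, LinearMap.proj_apply]
  decide +revert

/-- A totally even 8-point subset of ℙ³(𝔽₂) admitting a plane meeting it in
6 points is mapped onto the type II set by some element of GL(4,𝔽₂). -/
theorem totallyEven_with_six_plane_is_typeII (M : Set P3F2)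
    (hM : M.ncard = 8) (hTE : TotallyEven M)
    (hP : ∃ P : Set P3F2, IsPlane P ∧ (M ∩ P).ncard = 6) :
    ∃ g : (Fin 4 → ZMod 2) ≃ₗ[ZMod 2] (Fin 4 → ZMod 2),
      projMap g '' M = typeII := by
  obtain ⟨_, ⟨W, hW, rfl⟩, h6⟩ := hP
  have hcardW : Nat.card W = 8 := by
    rw [natCard_eq_pow_finrank (K := ZMod 2), hW, Nat.card_zmod]
    rfl
  have hproj : (LinearMap.proj 3 : (Fin 4 → ZMod 2) →ₗ[ZMod 2] ZMod 2) ≠ 0 := fun h => by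
    simpa using LinearMap.congr_fun h ![0, 0, 0, 1]
  rw [typeII_eq_preimage_rep_pairSwap]
  exact totallyEven_with_six_plane_is_typeII_general (by simp) (by simp [hW])
    (Dual.finrank_ker_add_one_of_ne_zero hproj) (by simp) (by decide) (by simp)
    (hM.trans hcardW.symm) (by rw [h6, hcardW])
    fun H hH => hTE _ ⟨H, by simpa using hH, rfl⟩
end

section
/- Let M be a totally even subset of ℙ³(𝔽₂) with exactly 8 elements such that M ∩ P ≠ ∅ for every plane P of ℙ³(𝔽₂). Then there exists a plane P with |M ∩ P| = 6. Equivalently: it is impossible that 0 < |M ∩ P| ≤ 4 holds for every plane P. -/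
/-!
Write `m = |M|` and `n_P = |M ∩ P|`. Each of the 15 planes has 7 points, 7 planes pass through a
given point, and 3 through two given points. Counting incidences of planes with points and with
ordered pairs of distinct points of `M` therefore gives
`∑ n_P = 7 m` and `∑ n_P (n_P - 1) = 3 m (m - 1)`, so that
`∑ (n_P - 2) (n_P - 4) = 3 m (m - 1) - 5 * 7 m + 8 * 15 = (m - 6) (3 m - 20)`.
This is positive for every natural number `m ≠ 6`, in particular for `m = 8`, so some plane has
`n_P < 2` or `n_P > 4`. As `n_P` is even, nonzero and at most 7, it is 6.
-/

open Finset Module Projectivization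
open scoped LinearAlgebra.Projectivization

section Subspaces

variable {K V : Type*} [DivisionRing K] [AddCommGroup V] [Module K V]

theorem range_projectivizationMap_subtype (W : Submodule K V) :
    Set.range (Projectivization.map W.subtype W.injective_subtype) = {x | x.submodule ≤ W} := by
  ext x
  constructor
  · rintro ⟨⟨w, hw⟩, rfl⟩
    exact (Submodule.span_singleton_le_iff_mem _ _).2 w.2
  · induction x using Projectivization.ind with | h v hv =>
    intro hvW
    have hvW : v ∈ W := (Submodule.span_singleton_le_iff_mem v W).1 hvW
    exact ⟨.mk K ⟨v, hvW⟩ (by simpa using hv), rfl⟩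

theorem ncard_setOf_submodule_le [Finite K] (W : Submodule K V) :
    {x : ℙ K V | x.submodule ≤ W}.ncard = ∑ i ∈ range (finrank K W), Nat.card K ^ i := by
  rw [← range_projectivizationMap_subtype, ← Set.image_univ,
    Set.ncard_image_of_injective _ (Projectivization.map_injective _ _), Set.ncard_univ,
    card_of_finrank K W rfl]

theorem finrank_submodule_sup_submodule {x y : ℙ K V} (hxy : x ≠ y) :
    finrank K ↥(x.submodule ⊔ y.submodule) = 2 := by
  have isAtom_submodule (z : ℙ K V) : IsAtom z.submodule :=
    Submodule.isAtom_iff_finrank_eq_one.2 z.finrank_submodule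
  have hdisj : x.submodule ⊓ y.submodule = ⊥ :=
    ((isAtom_submodule x).disjoint_of_ne (isAtom_submodule y)
      (submodule_injective.ne hxy)).eq_bot
  have := FiniteDimensional.of_finrank_eq_succ x.finrank_submodule
  have := FiniteDimensional.of_finrank_eq_succ y.finrank_submodule
  have := Submodule.finrank_sup_add_finrank_inf_eq x.submodule y.submodule
  rwa [hdisj, finrank_bot, add_zero, x.finrank_submodule, y.finrank_submodule] at this

end Subspaces

section Hyperplanes

variable {K V : Type*} [Field K] [AddCommGroup V] [Module K V]

/-- The hyperplane of `ℙ K V` on which the functionals spanning `H` vanish. Hyperplanes are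
parametrised by the points of the dual projective space, so that each occurs exactly once. -/
def hyperplane (H : ℙ K (Dual K V)) : Set (ℙ K V) :=
  {x | x.submodule ≤ H.submodule.dualCoannihilator}

theorem mem_hyperplane {H : ℙ K (Dual K V)} {x : ℙ K V} :
    x ∈ hyperplane H ↔ x.submodule ≤ H.submodule.dualCoannihilator :=
  Iff.rfl

variable [Finite K] [FiniteDimensional K V]

noncomputable instance fintypeDualProjectivization : Fintype (ℙ K (Dual K V)) :=
  have : Finite (Dual K V) := Module.finite_of_finite K
  Fintype.ofFinite _

open Classical in
theorem card_filter_le_dualCoannihilator (W : Submodule K V) :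
    #{H : ℙ K (Dual K V) | W ≤ H.submodule.dualCoannihilator} =
      ∑ i ∈ range (finrank K V - finrank K W), Nat.card K ^ i := by
  have hrank : finrank K W.dualAnnihilator = finrank K V - finrank K W := by
    have := Subspace.finrank_add_finrank_dualAnnihilator_eq W
    omega
  rw [← hrank, ← ncard_setOf_submodule_le, ← Set.ncard_coe_finset]
  simp only [coe_filter, mem_univ, true_and,
    ← Submodule.le_dualAnnihilator_iff_le_dualCoannihilator]

open Classical in
theorem sum_card_filter_le_dualCoannihilator {ι : Type*} (T : Finset ι) (W : ι → Submodule K V)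
    {r : ℕ} (hW : ∀ i ∈ T, finrank K (W i) = r) :
    ∑ H : ℙ K (Dual K V), #{i ∈ T | W i ≤ H.submodule.dualCoannihilator} =
      #T * ∑ i ∈ range (finrank K V - r), Nat.card K ^ i := by
  calc
    _ = ∑ i ∈ T, #{H : ℙ K (Dual K V) | W i ≤ H.submodule.dualCoannihilator} :=
      sum_card_bipartiteAbove_eq_sum_card_bipartiteBelow
        fun (H : ℙ K (Dual K V)) i ↦ W i ≤ H.submodule.dualCoannihilator
    _ = _ := sum_const_nat fun i hi ↦ by rw [card_filter_le_dualCoannihilator, hW i hi]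

open Classical in
theorem sum_card_filter_mem_hyperplane (M : Finset (ℙ K V)) :
    ∑ H, #{x ∈ M | x ∈ hyperplane H} = #M * ∑ i ∈ range (finrank K V - 1), Nat.card K ^ i :=
  sum_card_filter_le_dualCoannihilator M Projectivization.submodule fun x _ ↦ x.finrank_submodule

open Classical in
theorem sum_card_offDiag_filter_mem_hyperplane (M : Finset (ℙ K V)) :
    ∑ H, #(M.filter (· ∈ hyperplane H)).offDiag =
      #M.offDiag * ∑ i ∈ range (finrank K V - 2), Nat.card K ^ i := by
  have hpairs (H : ℙ K (Dual K V)) : (M.filter (· ∈ hyperplane H)).offDiag =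
      {p ∈ M.offDiag | p.1.submodule ⊔ p.2.submodule ≤ H.submodule.dualCoannihilator} := by
    ext p
    simp only [mem_offDiag, mem_filter, sup_le_iff, mem_hyperplane]
    tauto
  simp_rw [hpairs]
  exact sum_card_filter_le_dualCoannihilator M.offDiag _ fun p hp ↦
    finrank_submodule_sup_submodule (mem_offDiag.1 hp).2.2

end Hyperplanes

theorem isPlane_hyperplane (H : ℙ (ZMod 2) (Dual (ZMod 2) (Fin 4 → ZMod 2))) :
    IsPlane (hyperplane H) := by
  refine ⟨H.submodule.dualCoannihilator, ?_, rfl⟩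
  have := Subspace.finrank_add_finrank_dualCoannihilator_eq H.submodule
  rw [H.finrank_submodule, finrank_fin_fun] at this
  omega

theorem IsPlane.ncard_eq_seven {P : Set P3F2} (hP : IsPlane P) : P.ncard = 7 := by
  obtain ⟨W, hW, rfl⟩ := hP
  rw [ncard_setOf_submodule_le, hW, Nat.card_zmod]
  rfl

theorem card_dualProjectivization_eq_fifteen :
    Fintype.card (ℙ (ZMod 2) (Dual (ZMod 2) (Fin 4 → ZMod 2))) = 15 := by
  rw [Fintype.card_eq_nat_card, card_of_finrank (n := 4) _ _ (by simp), Nat.card_zmod]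
  rfl

theorem cast_card_offDiag {α : Type*} (s : Finset α) :
    (#s.offDiag : ℤ) = #s * (#s - 1) := by
  rw [offDiag_card, Nat.cast_sub (Nat.le_mul_self _), Nat.cast_mul]
  ring

theorem sum_ncard_inter_hyperplane_sub_two_mul_sub_four (M : Set P3F2) :
    ∑ H, (((M ∩ hyperplane H).ncard : ℤ) - 2) * ((M ∩ hyperplane H).ncard - 4) =
      (M.ncard - 6) * (3 * M.ncard - 20) := by
  classical
  lift M to Finset P3F2 using M.toFinite
  have hncard (H : ℙ (ZMod 2) (Dual (ZMod 2) (Fin 4 → ZMod 2))) :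
      (↑M ∩ hyperplane H).ncard = #{x ∈ M | x ∈ hyperplane H} := by
    rw [← Set.ncard_coe_finset, coe_filter]
    rfl
  have hpoints : ∑ H, (#{x ∈ M | x ∈ hyperplane H} : ℤ) = #M * 7 := by
    have := sum_card_filter_mem_hyperplane M
    rw [finrank_fin_fun, Nat.card_zmod] at this
    exact_mod_cast this
  have hpairs : ∑ H, (#(M.filter (· ∈ hyperplane H)).offDiag : ℤ) = #M.offDiag * 3 := by
    have := sum_card_offDiag_filter_mem_hyperplane M
    rw [finrank_fin_fun, Nat.card_zmod] at this
    exact_mod_cast this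
  simp_rw [hncard, Set.ncard_coe_finset]
  calc
    _ = ∑ H, ((#(M.filter (· ∈ hyperplane H)).offDiag : ℤ) -
          5 * #{x ∈ M | x ∈ hyperplane H} + 8) :=
      sum_congr rfl fun H _ ↦ by rw [cast_card_offDiag]; ring
    _ = #M.offDiag * 3 - 5 * (#M * 7) + 15 * 8 := by
      rw [sum_add_distrib, sum_sub_distrib, ← mul_sum, hpoints, hpairs, sum_const, card_univ,
        card_dualProjectivization_eq_fifteen, nsmul_eq_mul]
      rfl
    _ = _ := by rw [cast_card_offDiag]; ring

theorem totallyEven_meets_some_plane_in_six_general (M : Set P3F2) (hM : M.ncard ≠ 6)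
    (hTE : TotallyEven M) (hne : ∀ P : Set P3F2, IsPlane P → (M ∩ P).Nonempty) :
    ∃ P : Set P3F2, IsPlane P ∧ (M ∩ P).ncard = 6 := by
  have hsum : (0 : ℤ) < (M.ncard - 6) * (3 * M.ncard - 20) := by
    rcases hM.lt_or_gt with h | h
    · exact mul_pos_of_neg_of_neg (by omega) (by omega)
    · exact mul_pos (by omega) (by omega)
  obtain ⟨H, -, hH⟩ := exists_lt_of_sum_lt <|
    (sum_const_zero (s := univ)).trans_lt <|
      hsum.trans_eq (sum_ncard_inter_hyperplane_sub_two_mul_sub_four M).symm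
  have hplane := isPlane_hyperplane H
  refine ⟨_, hplane, ?_⟩
  have hle : (M ∩ hyperplane H).ncard ≤ 7 :=
    hplane.ncard_eq_seven ▸ Set.ncard_le_ncard Set.inter_subset_right
  have hpos : 0 < (M ∩ hyperplane H).ncard := (Set.ncard_pos).2 (hne _ hplane)
  obtain ⟨k, hk⟩ := hTE _ hplane
  rcases pos_and_pos_or_neg_and_neg_of_mul_pos hH with h | h <;> omega

/-- A totally even 8-point subset of ℙ³(𝔽₂) meeting every plane non-trivially
must meet some plane in exactly 6 points. -/
theorem totallyEven_meets_some_plane_in_six (M : Set P3F2)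
    (hM : M.ncard = 8) (hTE : TotallyEven M)
    (hne : ∀ P : Set P3F2, IsPlane P → (M ∩ P).Nonempty) :
    ∃ P : Set P3F2, IsPlane P ∧ (M ∩ P).ncard = 6 :=
  totallyEven_meets_some_plane_in_six_general M (by simp [hM]) hTE hne
end
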